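/- arXiv:2303.01721 — 7 statements merged into one kernel-verified Lean document; each statement's English description precedes it below -/
import Mathlib

section
/- For every pomset 𝕡 on s coordinates and every labeling π with n = Σ_{i∈[s]} π(i), the pomset block distance d_{(𝕡,π)} is a metric on ℤ_m^n: for all u, v, w ∈ ℤ_m^n one has d_{(𝕡,π)}(u,v) ≥ 0 with equality if and only if u = v, d_{(𝕡,π)}(u,v) = d_{(𝕡,π)}(v,u), and d_{(𝕡,π)}(u,v) ≤ d_{(𝕡,π)}(u,w) + d_{(𝕡,π)}(w,v). -/
open scoped Classical

noncomputable section

/-- Lee weight of an element of `ZMod m`. -/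
def leeWt (m : ℕ) (a : ZMod m) : ℕ := min a.val (m - a.val)

/-- Block Lee weight of the `i`-th block of `u`. -/
def blockWt (m s : ℕ) (π : Fin s → ℕ) (u : ∀ i : Fin s, Fin (π i) → ZMod m)
    (i : Fin s) : ℕ :=
  Finset.univ.sup fun t => leeWt m (u i t)

/-- The `(𝕡,π)`-weight of `u`. -/
def pomsetWt (m s : ℕ) (P : PartialOrder (Fin s)) (π : Fin s → ℕ)
    (u : ∀ i : Fin s, Fin (π i) → ZMod m) : ℕ :=
  ∑ i : Fin s,
    if ∃ j, j ≠ i ∧ P.le i j ∧ 0 < blockWt m s π u j then m / 2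
    else blockWt m s π u i

/-- The pomset block distance. -/
def pomsetDist (m s : ℕ) (P : PartialOrder (Fin s)) (π : Fin s → ℕ)
    (u v : ∀ i : Fin s, Fin (π i) → ZMod m) : ℕ :=
  pomsetWt m s P π (u - v)

/-- An ideal of the pomset `𝕡`, given by its count function `I : [s] → {0,…,⌊m/2⌋}`. -/
def IsIdeal (m s : ℕ) (P : PartialOrder (Fin s)) (I : Fin s → ℕ) : Prop :=
  (∀ a, I a ≤ m / 2) ∧ ∀ a b, 0 < I a → P.le b a → b ≠ a → I b = m / 2

/-- An ideal has full count if every element of its root set has count `⌊m/2⌋`. -/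
def FullCount (m : ℕ) {s : ℕ} (I : Fin s → ℕ) : Prop :=
  ∀ a, 0 < I a → I a = m / 2

/-- The cardinality `|I|` of an ideal. -/
def idealCard {s : ℕ} (I : Fin s → ℕ) : ℕ := ∑ a, I a

/-- The cardinality `|I*|` of the root set of an ideal. -/
def rootCard {s : ℕ} (I : Fin s → ℕ) : ℕ :=
  (Finset.univ.filter fun a => 0 < I a).card

/-- `Σ_{i ∈ I*} k_i`. -/
def rootSum {s : ℕ} (π I : Fin s → ℕ) : ℕ :=
  ∑ a ∈ Finset.univ.filter (fun a => 0 < I a), π a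

/-- The `I`-ball centered at `u`. -/
def ballI (m s : ℕ) (π : Fin s → ℕ) (I : Fin s → ℕ)
    (u : ∀ i : Fin s, Fin (π i) → ZMod m) :
    Set (∀ i : Fin s, Fin (π i) → ZMod m) :=
  {v | ∀ i, blockWt m s π (u - v) i ≤ I i}

/-- `𝒞` is `I`-perfect: the `I`-balls centered at codewords are pairwise
disjoint and cover the whole space. -/
def IPerfect (m s : ℕ) (π : Fin s → ℕ) (I : Fin s → ℕ)
    (C : Set (∀ i : Fin s, Fin (π i) → ZMod m)) : Prop :=
  (C.Pairwise fun c c' => Disjoint (ballI m s π I c) (ballI m s π I c')) ∧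
  (⋃ c ∈ C, ballI m s π I c) = Set.univ

/-- The `r`-ball centered at `u`. -/
def ballR (m s : ℕ) (P : PartialOrder (Fin s)) (π : Fin s → ℕ) (r : ℕ)
    (u : ∀ i : Fin s, Fin (π i) → ZMod m) :
    Set (∀ i : Fin s, Fin (π i) → ZMod m) :=
  {v | pomsetDist m s P π u v ≤ r}

/-- The standard dot product on `ℤ_m^n`. -/
def dotProd (m s : ℕ) (π : Fin s → ℕ)
    (c v : ∀ i : Fin s, Fin (π i) → ZMod m) : ZMod m :=
  ∑ i, ∑ t, c i t * v i t

/-- The dual code `𝒞^⊥`. -/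
def dualCode (m s : ℕ) (π : Fin s → ℕ)
    (C : Set (∀ i : Fin s, Fin (π i) → ZMod m)) :
    Set (∀ i : Fin s, Fin (π i) → ZMod m) :=
  {v | ∀ c ∈ C, dotProd m s π c v = 0}

/-- The dual pomset, encoded by the opposite partial order. -/
def dualOrder (s : ℕ) (P : PartialOrder (Fin s)) : PartialOrder (Fin s) where
  le a b := P.le b a
  lt a b := P.lt b a
  le_refl a := P.le_refl a
  le_trans a b c h1 h2 := P.le_trans _ _ _ h2 h1
  lt_iff_le_not_ge a b := P.lt_iff_le_not_ge b a
  le_antisymm a b h1 h2 := (P.le_antisymm _ _ h1 h2).symm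

/-- The minimum `(𝕡,π)`-distance of a code. -/
def minDist (m s : ℕ) (P : PartialOrder (Fin s)) (π : Fin s → ℕ)
    (C : Set (∀ i : Fin s, Fin (π i) → ZMod m)) : ℕ :=
  sInf {r | ∃ c ∈ C, ∃ c' ∈ C, c ≠ c' ∧ r = pomsetWt m s P π (c - c')}

/-- `𝒞` is an MDS `(𝕡,π)`-code: it attains the Singleton bound
`n − ⌈log_m K⌉ ≥ max { Σ_{i∈I*} k_i : I ideal, |I*| = ⌊(d−1)/⌊m/2⌋⌋ }`. -/
def IsMDS (m s : ℕ) (P : PartialOrder (Fin s)) (π : Fin s → ℕ)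
    (C : Set (∀ i : Fin s, Fin (π i) → ZMod m)) : Prop :=
  (∀ I, IsIdeal m s P I →
      rootCard I = (minDist m s P π C - 1) / (m / 2) →
      rootSum π I ≤ (∑ i, π i) - Nat.clog m (Nat.card ↥C)) ∧
  (∃ I, IsIdeal m s P I ∧
      rootCard I = (minDist m s P π C - 1) / (m / 2) ∧
      rootSum π I = (∑ i, π i) - Nat.clog m (Nat.card ↥C))

/-- The chain pomset on `[s]`: the usual total order on `Fin s`. -/
def chainOrder (s : ℕ) : PartialOrder (Fin s) := inferInstance

lemma leeWt_eq_zero {m : ℕ} [NeZero m] (a : ZMod m) : leeWt m a = 0 ↔ a = 0 := by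
  have h := ZMod.val_lt a
  rw [← ZMod.val_eq_zero]
  unfold leeWt
  omega

lemma leeWt_le {m : ℕ} (a : ZMod m) : leeWt m a ≤ m / 2 := by
  unfold leeWt
  omega

lemma leeWt_neg {m : ℕ} [NeZero m] (a : ZMod m) : leeWt m (-a) = leeWt m a := by
  have h := ZMod.val_lt a
  unfold leeWt
  rw [ZMod.neg_val]
  split_ifs with h0
  · simp [h0]
  · omega

lemma leeWt_add {m : ℕ} [NeZero m] (a b : ZMod m) :
    leeWt m (a + b) ≤ leeWt m a + leeWt m b := by
  have ha := ZMod.val_lt a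
  have hb := ZMod.val_lt b
  unfold leeWt
  rcases lt_or_ge (a.val + b.val) m with h | h
  · rw [ZMod.val_add_of_lt h]
    omega
  · have := ZMod.val_add_val_of_le h
    omega

lemma blockWt_eq_zero {m s : ℕ} [NeZero m] (π : Fin s → ℕ)
    (u : ∀ i : Fin s, Fin (π i) → ZMod m) (i : Fin s) :
    blockWt m s π u i = 0 ↔ u i = 0 := by
  unfold blockWt
  rw [← Nat.bot_eq_zero, Finset.sup_eq_bot_iff]
  simp only [Finset.mem_univ, true_imp_iff, Nat.bot_eq_zero, leeWt_eq_zero]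
  exact funext_iff.symm

lemma blockWt_le {m s : ℕ} (π : Fin s → ℕ)
    (u : ∀ i : Fin s, Fin (π i) → ZMod m) (i : Fin s) :
    blockWt m s π u i ≤ m / 2 :=
  Finset.sup_le fun _ _ => leeWt_le _

lemma blockWt_neg {m s : ℕ} [NeZero m] (π : Fin s → ℕ)
    (u : ∀ i : Fin s, Fin (π i) → ZMod m) :
    blockWt m s π (-u) = blockWt m s π u := by
  funext i
  simp [blockWt, leeWt_neg]

lemma blockWt_add {m s : ℕ} [NeZero m] (π : Fin s → ℕ)
    (u v : ∀ i : Fin s, Fin (π i) → ZMod m) (i : Fin s) :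
    blockWt m s π (u + v) i ≤ blockWt m s π u i + blockWt m s π v i := by
  refine Finset.sup_le fun t _ => (leeWt_add _ _).trans (add_le_add ?_ ?_)
  · exact Finset.le_sup (f := fun t => leeWt m (u i t)) (Finset.mem_univ t)
  · exact Finset.le_sup (f := fun t => leeWt m (v i t)) (Finset.mem_univ t)

lemma pomsetWt_eq_zero {m s : ℕ} (hm : 4 ≤ m) [NeZero m] (P : PartialOrder (Fin s))
    (π : Fin s → ℕ) (u : ∀ i : Fin s, Fin (π i) → ZMod m) :
    pomsetWt m s P π u = 0 ↔ u = 0 := by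
  unfold pomsetWt
  rw [Finset.sum_eq_zero_iff]
  constructor
  · intro h
    funext i
    have hi := h i (Finset.mem_univ i)
    split_ifs at hi with hc
    · omega
    · exact (blockWt_eq_zero π u i).1 hi
  · rintro rfl i _
    have h0 : ∀ j, blockWt m s π (0 : ∀ i : Fin s, Fin (π i) → ZMod m) j = 0 :=
      fun j => (blockWt_eq_zero π _ j).2 rfl
    simp [h0]

lemma pomsetWt_add {m s : ℕ} [NeZero m] (P : PartialOrder (Fin s))
    (π : Fin s → ℕ) (u v : ∀ i : Fin s, Fin (π i) → ZMod m) :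
    pomsetWt m s P π (u + v) ≤ pomsetWt m s P π u + pomsetWt m s P π v := by
  unfold pomsetWt
  rw [← Finset.sum_add_distrib]
  refine Finset.sum_le_sum fun i _ => ?_
  have h1 := blockWt_add π u v i
  have h2 := blockWt_le π (u + v) i
  by_cases hu : ∃ j, j ≠ i ∧ P.le i j ∧ 0 < blockWt m s π u j
  · rw [if_pos hu]
    split_ifs <;> omega
  by_cases hv : ∃ j, j ≠ i ∧ P.le i j ∧ 0 < blockWt m s π v j
  · rw [if_pos hv]
    split_ifs <;> omega
  have huv : ¬ ∃ j, j ≠ i ∧ P.le i j ∧ 0 < blockWt m s π (u + v) j := by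
    rintro ⟨j, hj, hij, hp⟩
    have h3 := blockWt_add π u v j
    rcases Nat.eq_zero_or_pos (blockWt m s π u j) with h | h
    · exact hv ⟨j, hj, hij, by omega⟩
    · exact hu ⟨j, hj, hij, h⟩
  rw [if_neg hu, if_neg hv, if_neg huv]
  exact h1

/-- the pomset block distance is a metric on `ℤ_m^n`. -/
theorem pomset_block_dist_is_metric
    (m s : ℕ) (hm : 4 ≤ m) (hs : 1 ≤ s)
    (P : PartialOrder (Fin s)) (π : Fin s → ℕ) (hπ : ∀ i, 0 < π i)
    (n : ℕ) (hn : n = ∑ i, π i)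
    (u v w : ∀ i : Fin s, Fin (π i) → ZMod m) :
    0 ≤ pomsetDist m s P π u v ∧
    (pomsetDist m s P π u v = 0 ↔ u = v) ∧
    pomsetDist m s P π u v = pomsetDist m s P π v u ∧
    pomsetDist m s P π u v ≤ pomsetDist m s P π u w + pomsetDist m s P π w v := by
  haveI : NeZero m := ⟨by omega⟩
  refine ⟨Nat.zero_le _, ?_, ?_, ?_⟩
  · unfold pomsetDist
    rw [pomsetWt_eq_zero hm, sub_eq_zero]
  · unfold pomsetDist
    rw [← neg_sub v u]
    unfold pomsetWt
    rw [blockWt_neg]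
  · unfold pomsetDist
    rw [← sub_add_sub_cancel u w v]
    exact pomsetWt_add P π _ _

end
end

section
/- Let I be an ideal of 𝕡 with full count. Then the I^c-ball about 0 taken with respect to the dual pomset 𝕡̃ equals the orthogonal complement of the I-ball about 0 taken with respect to 𝕡, i.e. B_{I^c,𝕡̃} = {v ∈ ℤ_m^n : c·v = 0 for all c ∈ B_{I,𝕡}}. -/
open scoped Classical

noncomputable section

lemma leeWt_le_half (m : ℕ) (a : ZMod m) : leeWt m a ≤ m / 2 := by
  unfold leeWt
  omega

lemma leeWt_neg_eq_zero_iff (m : ℕ) (hm : 4 ≤ m) (a : ZMod m) : leeWt m (0 - a) = 0 ↔ a = 0 := by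
  haveI : NeZero m := ⟨by omega⟩
  have h := ZMod.val_lt (0 - a)
  have h2 : leeWt m (0 - a) = 0 ↔ (0 - a).val = 0 := by
    unfold leeWt
    omega
  rw [h2, ZMod.val_eq_zero, zero_sub, neg_eq_zero]

lemma mem_ballI_full (m s : ℕ) (hm : 4 ≤ m) (π J : Fin s → ℕ)
    (hJ : ∀ a, J a = 0 ∨ J a = m / 2) (v : ∀ i : Fin s, Fin (π i) → ZMod m) :
    v ∈ ballI m s π J 0 ↔ ∀ i, J i = 0 → ∀ t, v i t = 0 := by
  unfold ballI blockWt
  simp only [Set.mem_setOf_eq, Finset.sup_le_iff, Finset.mem_univ, true_imp_iff]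
  constructor
  · intro h i hi t
    have h1 := h i t
    rw [hi, Nat.le_zero] at h1
    exact (leeWt_neg_eq_zero_iff m hm _).1 h1
  · intro h i t
    rcases hJ i with hi | hi
    · rw [hi, Nat.le_zero]
      exact (leeWt_neg_eq_zero_iff m hm _).2 (h i hi t)
    · rw [hi]
      exact leeWt_le_half m _

/-- `B_{I^c,𝕡̃}` equals the orthogonal complement of `B_{I,𝕡}`. -/
theorem dual_ball_eq_orthogonal
    (m s : ℕ) (hm : 4 ≤ m) (hs : 1 ≤ s)
    (P : PartialOrder (Fin s)) (π : Fin s → ℕ) (hπ : ∀ i, 0 < π i)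
    (I : Fin s → ℕ) (hI : IsIdeal m s P I) (hfull : FullCount m I) :
    ballI m s π (fun a => m / 2 - I a) (0 : ∀ i : Fin s, Fin (π i) → ZMod m) =
      {v | ∀ c ∈ ballI m s π I (0 : ∀ i : Fin s, Fin (π i) → ZMod m),
        dotProd m s π c v = 0} := by
  have hJ : ∀ a, I a = 0 ∨ I a = m / 2 := fun a => by
    rcases Nat.eq_zero_or_pos (I a) with h | h
    · exact Or.inl h
    · exact Or.inr (hfull a h)
  ext v
  rw [mem_ballI_full m s hm π _ (fun a => by rcases hJ a with h | h <;> simp [h])]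
  simp only [Set.mem_setOf_eq, mem_ballI_full m s hm π I hJ]
  unfold dotProd
  constructor
  · intro h c hc
    refine Finset.sum_eq_zero fun i _ => Finset.sum_eq_zero fun t _ => ?_
    rcases hJ i with hi | hi
    · rw [hc i hi t, zero_mul]
    · rw [h i (by omega) t, mul_zero]
  · intro h i hi t
    have hi0 : I i ≠ 0 := by omega
    have key := h (fun j u => if (⟨j, u⟩ : Σ j, Fin (π j)) = ⟨i, t⟩ then 1 else 0) (by
      intro j hj u
      refine if_neg fun he => ?_
      have : j = i := congrArg Sigma.fst he
      exact hi0 (this ▸ hj))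
    rw [← Fintype.sum_sigma' (fun j u => (if (⟨j, u⟩ : Σ j, Fin (π j)) = ⟨i, t⟩ then (1 : ZMod m) else 0) * v j u)] at key
    simpa using key

end
end

section
/- Let 𝒞 ⊆ ℤ_m^n be a linear (n, m^k, d) (𝕡,π)-code and let I be an ideal of 𝕡 with full count. Then the following are equivalent: (1) 𝒞 is an I-perfect code; (2) Σ_{i∈I*} k_i = n − k and |𝒞 ∩ B_I| = 1; (3) |𝒞 ∩ B_I(u)| = 1 for all u ∈ ℤ_m^n. -/
open scoped Classical

noncomputable section

/-- Ball membership for full-count ideals. -/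
theorem mem_ballI_iff_aux (m s : ℕ) (hm : 4 ≤ m) (π : Fin s → ℕ) (I : Fin s → ℕ)
    (hfull : FullCount m I) (u v : ∀ i : Fin s, Fin (π i) → ZMod m) :
    v ∈ ballI m s π I u ↔ ∀ i, I i = 0 → u i = v i := by
  haveI : NeZero m := ⟨by omega⟩
  have key : ∀ a : ZMod m, leeWt m a ≤ 0 ↔ a = 0 := by
    intro a
    have h1 := ZMod.val_lt a
    rw [← ZMod.val_eq_zero]
    unfold leeWt
    omega
  constructor
  · intro h i hi
    have h2 := h i
    rw [hi] at h2
    unfold blockWt at h2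
    rw [Finset.sup_le_iff] at h2
    funext t
    have h3 := (key _).1 (h2 t (Finset.mem_univ t))
    exact sub_eq_zero.1 h3
  · intro h i
    unfold blockWt
    rw [Finset.sup_le_iff]
    intro t _
    by_cases hi : I i = 0
    · rw [hi, key]
      have := congrFun (h i hi) t
      simp [this]
    · rw [hfull i (by omega)]
      unfold leeWt
      omega

/-- The coordinates outside the root set. -/
def restrAux (m s : ℕ) (π : Fin s → ℕ) (I : Fin s → ℕ)
    (u : ∀ i : Fin s, Fin (π i) → ZMod m) :
    ∀ i : {i : Fin s // I i = 0}, Fin (π i) → ZMod m := fun i => u i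

theorem card_eq_aux (m : ℕ) [NeZero m] (ι : Type) [Fintype ι] (p : ι → ℕ) :
    Nat.card (∀ i : ι, Fin (p i) → ZMod m) = m ^ ∑ i, p i := by
  simp [Nat.card_pi, Finset.prod_pow_eq_pow_sum]

/-- equivalent characterizations of `I`-perfect linear codes. -/
theorem I_perfect_tfae
    (m s : ℕ) (hm : 4 ≤ m) (hs : 1 ≤ s)
    (P : PartialOrder (Fin s)) (π : Fin s → ℕ) (hπ : ∀ i, 0 < π i)
    (n k d : ℕ) (hn : n = ∑ i, π i)
    (C : Submodule (ZMod m) (∀ i : Fin s, Fin (π i) → ZMod m))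
    (hcard : Nat.card ↥C = m ^ k)
    (hd : IsLeast {r | ∃ c ∈ (C : Set (∀ i : Fin s, Fin (π i) → ZMod m)),
      ∃ c' ∈ (C : Set (∀ i : Fin s, Fin (π i) → ZMod m)), c ≠ c' ∧
        r = pomsetWt m s P π (c - c')} d)
    (I : Fin s → ℕ) (hI : IsIdeal m s P I) (hfull : FullCount m I) :
    [IPerfect m s π I (C : Set (∀ i : Fin s, Fin (π i) → ZMod m)),
     rootSum π I = n - k ∧
       Nat.card ↥((C : Set (∀ i : Fin s, Fin (π i) → ZMod m)) ∩ ballI m s π I 0) = 1,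
     ∀ u, Nat.card ↥((C : Set (∀ i : Fin s, Fin (π i) → ZMod m)) ∩ ballI m s π I u) = 1
    ].TFAE := by
  haveI : NeZero m := ⟨by omega⟩
  have hmem : ∀ u v, v ∈ ballI m s π I u ↔ restrAux m s π I u = restrAux m s π I v := by
    intro u v
    rw [mem_ballI_iff_aux m s hm π I hfull]
    constructor
    · intro h
      funext i
      exact h i.1 i.2
    · intro h i hi
      exact congrFun h ⟨i, hi⟩
  let f : C → (∀ i : {i : Fin s // I i = 0}, Fin (π i) → ZMod m) :=
    fun c => restrAux m s π I c.1
  have hsurj : Function.Surjective (restrAux m s π I) := by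
    intro w
    refine ⟨fun i => if h : I i = 0 then w ⟨i, h⟩ else 0, ?_⟩
    funext i
    simp [restrAux, i.2]
  have hone : ∀ u, Nat.card ↥((C : Set (∀ i : Fin s, Fin (π i) → ZMod m)) ∩ ballI m s π I u) = 1 ↔
      ∃! c : C, f c = restrAux m s π I u := by
    intro u
    rw [Nat.card_coe_set_eq, Set.ncard_eq_one]
    constructor
    · rintro ⟨a, ha⟩
      have haa : a ∈ (C : Set (∀ i : Fin s, Fin (π i) → ZMod m)) ∩ ballI m s π I u := by
        rw [ha]; rfl
      refine ⟨⟨a, haa.1⟩, ((hmem _ _).1 haa.2).symm, ?_⟩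
      intro c hc
      have : c.1 ∈ (C : Set (∀ i : Fin s, Fin (π i) → ZMod m)) ∩ ballI m s π I u :=
        ⟨c.2, (hmem _ _).2 hc.symm⟩
      rw [ha] at this
      exact Subtype.ext this
    · rintro ⟨c, hc, hu⟩
      refine ⟨c.1, Set.ext fun v => ⟨?_, ?_⟩⟩
      · rintro ⟨hv, hb⟩
        exact congrArg Subtype.val (hu ⟨v, hv⟩ ((hmem _ _).1 hb).symm)
      · intro hv
        have hv' : v = c.1 := hv
        subst hv'
        exact ⟨c.2, (hmem _ _).2 hc.symm⟩
  have h3 : (∀ u, Nat.card ↥((C : Set (∀ i : Fin s, Fin (π i) → ZMod m)) ∩ ballI m s π I u) = 1) ↔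
      Function.Bijective f := by
    rw [Function.bijective_iff_existsUnique]
    constructor
    · intro h w
      obtain ⟨u, rfl⟩ := hsurj w
      exact (hone u).1 (h u)
    · intro h u
      exact (hone u).2 (h _)
  have h1 : IPerfect m s π I (C : Set (∀ i : Fin s, Fin (π i) → ZMod m)) ↔
      Function.Bijective f := by
    constructor
    · rintro ⟨hp, hc⟩
      constructor
      · intro a b hab
        by_contra hne
        have := hp a.2 b.2 (fun h => hne (Subtype.ext h))
        exact Set.disjoint_left.1 this ((hmem a.1 a.1).2 rfl) ((hmem b.1 a.1).2 hab.symm)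
      · intro w
        obtain ⟨u, rfl⟩ := hsurj w
        have hu : u ∈ ⋃ c ∈ (C : Set (∀ i : Fin s, Fin (π i) → ZMod m)), ballI m s π I c := by
          rw [hc]; trivial
        simp only [Set.mem_iUnion] at hu
        obtain ⟨c, hcC, hcu⟩ := hu
        exact ⟨⟨c, hcC⟩, (hmem _ _).1 hcu⟩
    · rintro ⟨hi, hs'⟩
      constructor
      · intro a ha b hb hne
        rw [Set.disjoint_left]
        intro v hva hvb
        have := @hi ⟨a, ha⟩ ⟨b, hb⟩ (((hmem _ _).1 hva).trans ((hmem _ _).1 hvb).symm)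
        exact hne (congrArg Subtype.val this)
      · rw [Set.eq_univ_iff_forall]
        intro u
        obtain ⟨c, hc⟩ := hs' (restrAux m s π I u)
        simp only [Set.mem_iUnion]
        exact ⟨c.1, c.2, (hmem _ _).2 hc⟩
  have hinj : Nat.card ↥((C : Set (∀ i : Fin s, Fin (π i) → ZMod m)) ∩ ballI m s π I 0) = 1 ↔
      Function.Injective f := by
    rw [hone]
    constructor
    · intro h a b hab
      have e1 : f (a - b) = restrAux m s π I 0 := by
        funext i
        exact sub_eq_zero.2 (congrFun hab i)
      have e2 : f 0 = restrAux m s π I 0 := rfl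
      exact sub_eq_zero.1 (h.unique e1 e2)
    · intro h
      exact ⟨0, rfl, fun c hc => h hc⟩
  have hsum : rootSum π I + ∑ i : {i : Fin s // I i = 0}, π i = n := by
    rw [hn, rootSum, ← Finset.sum_filter_add_sum_filter_not Finset.univ (fun a => 0 < I a) π]
    congr 1
    rw [← Finset.sum_subtype (p := fun i => I i = 0)
      (Finset.univ.filter (fun a => ¬ 0 < I a)) (by simp) π]
  have hkn : k ≤ n := by
    have h := Nat.card_le_card_of_injective (fun c : C => c.1) Subtype.val_injective
    rw [hcard, card_eq_aux, ← hn] at h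
    exact (Nat.pow_le_pow_iff_right (by omega)).1 h
  have h2 : (rootSum π I = n - k ∧
      Nat.card ↥((C : Set (∀ i : Fin s, Fin (π i) → ZMod m)) ∩ ballI m s π I 0) = 1) ↔
      Function.Bijective f := by
    rw [hinj, Nat.bijective_iff_injective_and_card, hcard,
      card_eq_aux m {i : Fin s // I i = 0} (fun i => π i),
      Nat.pow_right_inj (by omega), and_comm]
    refine and_congr_right fun _ => ?_
    omega
  tfae_have 1 ↔ 3 := h1.trans h3.symm
  tfae_have 2 ↔ 3 := h2.trans h3.symm
  tfae_finish

end
end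

section
/- Let I be an ideal of 𝕡, with I_f = {a ∈ I* : I(a) = l} and I_p = {a ∈ I* : 0 < I(a) < l}. Suppose m is divisible by 2I(j)+1 for every j ∈ I_p. Let D = {v ∈ ℤ_m^n : v_i = 0 for i ∈ I_f; for i ∈ I_p every coordinate of v_i is of the form j(2I(i)+1) mod m with 0 ≤ j ≤ m/(2I(i)+1) − 1; for i ∈ [s]∖I* the block v_i is arbitrary}. Then the I-balls {B_I(v) : v ∈ D} are pairwise disjoint and their union is ℤ_m^n, and |D| = Π_{i∈I_p} (m/(2I(i)+1))^{k_i} · m^{Σ_{i∈[s]∖I*} k_i}. -/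
open scoped Classical

noncomputable section

theorem leeWt_eq_aux (m : ℕ) [NeZero m] (a : ZMod m) : leeWt m a = a.valMinAbs.natAbs := by
  rw [ZMod.valMinAbs_natAbs_eq_min]; rfl

theorem leeWt_le_aux (m : ℕ) [NeZero m] (a : ZMod m) (c : ℕ) :
    leeWt m a ≤ c ↔ ∃ e : ℤ, e.natAbs ≤ c ∧ a = (e : ZMod m) := by
  rw [leeWt_eq_aux]
  constructor
  · intro h
    exact ⟨a.valMinAbs, h, (ZMod.coe_valMinAbs a).symm⟩
  · rintro ⟨e, he, rfl⟩
    refine le_trans (ZMod.natAbs_min_of_le_div_two m _ e ?_ (ZMod.natAbs_valMinAbs_le _)) he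
    simp

/-- coordinate set of the code `D` -/
def coordSet (m c : ℕ) : Set (ZMod m) :=
  {x | (c = m / 2 → x = 0) ∧ (0 < c → c < m / 2 → ∃ j : ℕ,
    j ≤ m / (2 * c + 1) - 1 ∧ x = ((j * (2 * c + 1) : ℕ) : ZMod m))}

theorem coord_unique (m c : ℕ) (hm : 4 ≤ m) (hc : c ≤ m / 2)
    (hd : 0 < c → c < m / 2 → (2 * c + 1) ∣ m) (x y v : ZMod m)
    (hx : x ∈ coordSet m c) (hy : y ∈ coordSet m c)
    (h1 : leeWt m (x - v) ≤ c) (h2 : leeWt m (y - v) ≤ c) : x = y := by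
  haveI : NeZero m := ⟨by omega⟩
  rcases hc.eq_or_lt with h | h
  · rw [hx.1 h, hy.1 h]
  rw [leeWt_le_aux] at h1 h2
  obtain ⟨e, he, hxe⟩ := h1
  obtain ⟨f, hf, hyf⟩ := h2
  rcases Nat.eq_zero_or_pos c with h0 | h0
  · have : e = 0 := by omega
    have : f = 0 := by omega
    subst e f
    rw [sub_eq_iff_eq_add] at hxe hyf
    rw [hxe, hyf]
  obtain ⟨j, -, hj⟩ := hx.2 h0 h
  obtain ⟨k, -, hk⟩ := hy.2 h0 h
  have hdm := hd h0 h
  have key : (((j * (2 * c + 1) : ℕ) - (k * (2 * c + 1) : ℕ) - (e - f) : ℤ) : ZMod m) = 0 := by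
    push_cast at hj hk ⊢
    rw [← hj, ← hk, ← hxe, ← hyf]; ring
  rw [ZMod.intCast_zmod_eq_zero_iff_dvd] at key
  have h3 : ((2 * c + 1 : ℕ) : ℤ) ∣ e - f := by
    have h4 := (Int.natCast_dvd_natCast.2 hdm).trans key
    have h5 : ((2 * c + 1 : ℕ) : ℤ) ∣ (j * (2 * c + 1) : ℕ) - (k * (2 * c + 1) : ℕ) :=
      dvd_sub (by simp) (by simp)
    have := dvd_sub h5 h4
    simpa using this
  have h6 : e - f = 0 := Int.eq_zero_of_abs_lt_dvd h3 (by rw [abs_lt]; omega)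
  have : e = f := by omega
  subst f
  have := hxe.trans hyf.symm
  simpa using this

theorem coord_exists (m c : ℕ) (hm : 4 ≤ m) (hc : c ≤ m / 2)
    (hd : 0 < c → c < m / 2 → (2 * c + 1) ∣ m) (v : ZMod m) :
    ∃ x ∈ coordSet m c, leeWt m (x - v) ≤ c := by
  haveI : NeZero m := ⟨by omega⟩
  rcases hc.eq_or_lt with h | h
  · refine ⟨0, ⟨fun _ => rfl, fun _ h' => by omega⟩, ?_⟩
    unfold leeWt
    omega
  rcases Nat.eq_zero_or_pos c with h0 | h0
  · exact ⟨v, ⟨fun h' => by omega, fun h' => by omega⟩, by simp [leeWt]⟩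
  obtain ⟨q, hq⟩ := hd h0 h
  have hdiv : m / (2 * c + 1) = q := by
    rw [hq]; exact Nat.mul_div_cancel_left _ (by omega)
  have hq0 : 0 < q := by
    rcases Nat.eq_zero_or_pos q with h' | h'
    · subst h'; omega
    · exact h'
  have hmem : ∀ a : ℕ, ((a * (2 * c + 1) : ℕ) : ZMod m) ∈ coordSet m c := by
    intro a
    refine ⟨fun h' => by omega, fun _ _ => ⟨a % q, ?_, ?_⟩⟩
    · rw [hdiv]; have := Nat.mod_lt a hq0; omega
    · rw [ZMod.natCast_eq_natCast_iff]
      rw [hq, mul_comm a, mul_comm (a % q)]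
      exact Nat.ModEq.mul_left' _ (Nat.mod_modEq a q).symm
  have hv : ((v.val : ℕ) : ZMod m) = v := ZMod.natCast_zmod_val v
  have hdm := Nat.div_add_mod v.val (2 * c + 1)
  have hlt := Nat.mod_lt v.val (show 2 * c + 1 > 0 by omega)
  generalize v.val / (2 * c + 1) = a at hdm
  generalize v.val % (2 * c + 1) = r at hdm hlt
  by_cases hr : r ≤ c
  · refine ⟨_, hmem a, ?_⟩
    rw [leeWt_le_aux]
    refine ⟨-r, by omega, ?_⟩
    rw [← hv, ← hdm]; push_cast; ring
  · refine ⟨_, hmem (a + 1), ?_⟩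
    rw [leeWt_le_aux]
    refine ⟨2 * c + 1 - r, by omega, ?_⟩
    rw [← hv, ← hdm]; push_cast; ring

theorem coord_card (m c : ℕ) (hm : 4 ≤ m) (hc : c ≤ m / 2)
    (hd : 0 < c → c < m / 2 → (2 * c + 1) ∣ m) :
    Nat.card (coordSet m c) =
      (if 0 < c ∧ c < m / 2 then m / (2 * c + 1) else 1) * (if c = 0 then m else 1) := by
  haveI : NeZero m := ⟨by omega⟩
  rcases hc.eq_or_lt with h | h
  · have : coordSet m c = {0} := by
      ext x
      exact ⟨fun hx => hx.1 h, fun hx => ⟨fun _ => hx, fun _ h' => by omega⟩⟩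
    rw [this, if_neg (by omega), if_neg (by omega)]
    simp
  rcases Nat.eq_zero_or_pos c with h0 | h0
  · have : coordSet m c = Set.univ := by
      ext x
      exact ⟨fun hx => trivial, fun hx => ⟨fun _ => by omega, fun _ h' => by omega⟩⟩
    rw [this, if_neg (by omega), if_pos h0]
    simp
  obtain ⟨q, hq⟩ := hd h0 h
  have hdiv : m / (2 * c + 1) = q := by
    rw [hq]; exact Nat.mul_div_cancel_left _ (by omega)
  have hq0 : 0 < q := by
    rcases Nat.eq_zero_or_pos q with h' | h'
    · subst h'; omega
    · exact h'
  rw [if_pos ⟨h0, h⟩, if_neg (by omega), hdiv, mul_one]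
  have : coordSet m c =
      (((Finset.range q).image fun j : ℕ => ((j * (2 * c + 1) : ℕ) : ZMod m) : Finset (ZMod m)) :
        Set (ZMod m)) := by
    ext x
    simp only [Finset.coe_image, Set.mem_image, Finset.coe_range, Set.mem_Iio]
    constructor
    · intro hx
      obtain ⟨j, hj, hx⟩ := hx.2 h0 h
      exact ⟨j, by omega, hx.symm⟩
    · rintro ⟨j, hj, rfl⟩
      exact ⟨fun h' => by omega, fun _ _ => ⟨j, by omega, rfl⟩⟩
  rw [this, Nat.card_coe_set_eq, Set.ncard_coe_finset, Finset.card_image_of_injOn, Finset.card_range]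
  intro a ha b hb hab
  simp only [Finset.coe_range, Set.mem_Iio] at ha hb
  simp only [ZMod.natCast_eq_natCast_iff] at hab
  have h1 : a * (2 * c + 1) < m := by rw [hq]; nlinarith
  have h2 : b * (2 * c + 1) < m := by rw [hq]; nlinarith
  have := Nat.ModEq.eq_of_lt_of_lt hab h1 h2
  exact Nat.eq_of_mul_eq_mul_right (by omega) this

/-- for an ideal `I` with `2I(j)+1 ∣ m` for every `j ∈ I_p`, the
`I`-balls centered at the elements of `D` partition `ℤ_m^n`, and `|D|` is as stated. -/
theorem I_balls_centered_at_D_partition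
    (m s : ℕ) (hm : 4 ≤ m) (hs : 1 ≤ s)
    (P : PartialOrder (Fin s)) (π : Fin s → ℕ) (hπ : ∀ i, 0 < π i)
    (n : ℕ) (hn : n = ∑ i, π i)
    (I : Fin s → ℕ) (hI : IsIdeal m s P I)
    (hdvd : ∀ j, 0 < I j → I j < m / 2 → (2 * I j + 1) ∣ m) :
    let D : Set (∀ i : Fin s, Fin (π i) → ZMod m) :=
      {v | (∀ i, I i = m / 2 → v i = 0) ∧
        (∀ i, 0 < I i → I i < m / 2 → ∀ t : Fin (π i), ∃ j : ℕ,
          j ≤ m / (2 * I i + 1) - 1 ∧ v i t = ((j * (2 * I i + 1) : ℕ) : ZMod m))}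
    (D.Pairwise fun x y => Disjoint (ballI m s π I x) (ballI m s π I y)) ∧
    (⋃ x ∈ D, ballI m s π I x) = Set.univ ∧
    Nat.card ↥D =
      (∏ i ∈ Finset.univ.filter (fun i => 0 < I i ∧ I i < m / 2),
        (m / (2 * I i + 1)) ^ π i) *
      m ^ (∑ i ∈ Finset.univ.filter (fun i => I i = 0), π i) := by
  intro D
  haveI : NeZero m := ⟨by omega⟩
  have hD : ∀ v, v ∈ D ↔ ∀ i t, v i t ∈ coordSet m (I i) := by
    intro v
    constructor
    · intro hv i t
      exact ⟨fun h => by rw [hv.1 i h]; rfl, fun h h' => hv.2 i h h' t⟩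
    · intro hv
      exact ⟨fun i h => funext fun t => (hv i t).1 h, fun i h h' t => (hv i t).2 h h'⟩
  have hB : ∀ u v, v ∈ ballI m s π I u ↔ ∀ i t, leeWt m (u i t - v i t) ≤ I i := by
    intro u v
    simp [ballI, blockWt, Finset.sup_le_iff]
  refine ⟨?_, ?_, ?_⟩
  · intro x hx y hy hxy
    rw [Set.disjoint_left]
    intro v h1 h2
    rw [hD] at hx hy
    rw [hB] at h1 h2
    exact hxy (funext fun i => funext fun t =>
      coord_unique m (I i) hm (hI.1 i) (hdvd i) _ _ _ (hx i t) (hy i t) (h1 i t) (h2 i t))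
  · rw [Set.eq_univ_iff_forall]
    intro v
    choose x hx1 hx2 using fun (i : Fin s) (t : Fin (π i)) =>
      coord_exists m (I i) hm (hI.1 i) (hdvd i) (v i t)
    simp only [Set.mem_iUnion]
    exact ⟨x, (hD x).2 hx1, (hB x v).2 hx2⟩
  · let e : ↥D ≃ (∀ i : Fin s, Fin (π i) → ↥(coordSet m (I i))) :=
      { toFun := fun v i t => ⟨v.1 i t, (hD v.1).1 v.2 i t⟩
        invFun := fun w => ⟨fun i t => (w i t).1, (hD _).2 fun i t => (w i t).2⟩
        left_inv := fun v => rfl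
        right_inv := fun w => rfl }
    rw [Nat.card_congr e, Nat.card_pi]
    simp only [Nat.card_fun, Nat.card_eq_fintype_card (α := Fin _), Fintype.card_fin]
    rw [Finset.prod_filter, ← Finset.prod_pow_eq_pow_sum, Finset.prod_filter,
      ← Finset.prod_mul_distrib]
    refine Finset.prod_congr rfl fun i _ => ?_
    rw [coord_card m (I i) hm (hI.1 i) (hdvd i), mul_pow]
    congr 1 <;> split_ifs <;> simp

end
end

section
/- Let I be an ideal of 𝕡 and let I_p = {a ∈ I* : 0 < I(a) < l}. If m is not divisible by 2I(j)+1 for some j ∈ I_p, then no collection of I-balls partitions ℤ_m^n: there is no subset D ⊆ ℤ_m^n such that the balls {B_I(v) : v ∈ D} are pairwise disjoint and their union is ℤ_m^n. -/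
open scoped Classical

noncomputable section

theorem card_lee_ball (m r : ℕ) [NeZero m] (h : 2 * r + 1 ≤ m) :
    (Finset.univ.filter fun a : ZMod m => leeWt m a ≤ r).card = 2 * r + 1 := by
  rw [← Finset.card_image_of_injective _ (ZMod.val_injective m)]
  have : (Finset.univ.filter fun a : ZMod m => leeWt m a ≤ r).image ZMod.val
      = Finset.range (r + 1) ∪ Finset.Ico (m - r) m := by
    ext k
    simp only [Finset.mem_image, Finset.mem_filter, Finset.mem_univ, true_and, Finset.mem_union,
      Finset.mem_range, Finset.mem_Ico]
    unfold leeWt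
    constructor
    · rintro ⟨a, ha, rfl⟩
      have := ZMod.val_lt a
      omega
    · intro hk
      have hkm : k < m := by omega
      refine ⟨(k : ZMod m), ?_, ZMod.val_cast_of_lt hkm⟩
      rw [ZMod.val_cast_of_lt hkm]
      omega
  rw [this, Finset.card_union_of_disjoint]
  · simp
    omega
  · rw [Finset.disjoint_left]
    intro k
    simp only [Finset.mem_range, Finset.mem_Ico]
    omega

theorem card_lee_ball' (m r : ℕ) [NeZero m] (h : 2 * r + 1 ≤ m) (c : ZMod m) :
    (Finset.univ.filter fun a : ZMod m => leeWt m (c - a) ≤ r).card = 2 * r + 1 := by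
  rw [← card_lee_ball m r h]
  refine Finset.card_bij (fun a _ => c - a) ?_ ?_ ?_
  · intro a ha
    simpa using ha
  · intro a _ b _ hab
    simpa using hab
  · intro b hb
    exact ⟨c - b, by simpa using hb, by simp⟩

theorem mem_ballI (m s : ℕ) (π I : Fin s → ℕ) (x v : ∀ i : Fin s, Fin (π i) → ZMod m) :
    v ∈ ballI m s π I x ↔ ∀ i t, leeWt m (x i t - v i t) ≤ I i := by
  simp [ballI, blockWt, Finset.sup_le_iff]

/-- if `m` is not divisible by `2I(j)+1` for some `j ∈ I_p`, no
collection of `I`-balls partitions `ℤ_m^n`. -/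
theorem no_partition_of_I_balls
    (m s : ℕ) (hm : 4 ≤ m) (hs : 1 ≤ s)
    (P : PartialOrder (Fin s)) (π : Fin s → ℕ) (hπ : ∀ i, 0 < π i)
    (n : ℕ) (hn : n = ∑ i, π i)
    (I : Fin s → ℕ) (hI : IsIdeal m s P I)
    (j : Fin s) (hj1 : 0 < I j) (hj2 : I j < m / 2)
    (hnd : ¬ (2 * I j + 1) ∣ m) :
    ¬ ∃ D : Set (∀ i : Fin s, Fin (π i) → ZMod m),
      (D.Pairwise fun x y => Disjoint (ballI m s π I x) (ballI m s π I y)) ∧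
      (⋃ x ∈ D, ballI m s π I x) = Set.univ := by
  rintro ⟨D, hD, hU⟩
  haveI : NeZero m := ⟨by omega⟩
  let t0 : Fin (π j) := ⟨0, hπ j⟩
  let L : ZMod m → ∀ i : Fin s, Fin (π i) → ZMod m := fun a i t =>
    if i = j ∧ t.val = 0 then a else 0
  have hex : ∀ a, ∃ x ∈ D, L a ∈ ballI m s π I x := by
    intro a
    have : L a ∈ ⋃ x ∈ D, ballI m s π I x := by rw [hU]; trivial
    simpa using this
  choose f hfD hf using hex
  apply hnd
  have key : ∀ b, (Finset.univ.filter fun a => f a = f b).card = 2 * I j + 1 := by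
    intro b
    rw [← card_lee_ball' m (I j) (by omega) (f b j t0)]
    congr 1
    ext a
    simp only [Finset.mem_filter, Finset.mem_univ, true_and]
    constructor
    · intro hab
      have h := (mem_ballI m s π I _ _).1 (hf a) j t0
      rw [hab] at h
      simpa [L, t0] using h
    · intro h
      have hm : L a ∈ ballI m s π I (f b) := by
        rw [mem_ballI]
        intro i t
        by_cases hit : i = j ∧ t.val = 0
        · obtain ⟨rfl, ht⟩ := hit
          have : t = t0 := Fin.ext ht
          subst this
          simpa [L, t0] using h
        · have hb := (mem_ballI m s π I _ _).1 (hf b) i t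
          simp only [L, if_neg hit] at hb ⊢
          exact hb
      by_contra hne
      exact Set.disjoint_left.1 (hD (hfD a) (hfD b) hne) (hf a) hm
  have hc := Finset.card_eq_sum_card_image f (Finset.univ : Finset (ZMod m))
  rw [Finset.card_univ, ZMod.card] at hc
  rw [hc]
  apply Finset.dvd_sum
  intro x hx
  obtain ⟨b, _, rfl⟩ := Finset.mem_image.1 hx
  rw [← key b]

end
end

section
/- (Singleton bound) Let 𝒞 ⊆ ℤ_m^n be an (n, K, d) (𝕡,π)-code and set r = ⌊(d−1)/l⌋. Then n − ⌈log_m K⌉ ≥ max{Σ_{i∈I*} k_i : I an ideal of 𝕡 with |I*| = r}. -/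
open scoped Classical

noncomputable section

/-- Singleton bound: `n − ⌈log_m K⌉ ≥ Σ_{i∈I*} k_i` for every ideal
`I` with `|I*| = ⌊(d−1)/⌊m/2⌋⌋`. -/
theorem singleton_bound
    (m s : ℕ) (hm : 4 ≤ m) (hs : 1 ≤ s)
    (P : PartialOrder (Fin s)) (π : Fin s → ℕ) (hπ : ∀ i, 0 < π i)
    (n K d : ℕ) (hn : n = ∑ i, π i)
    (C : Set (∀ i : Fin s, Fin (π i) → ZMod m))
    (hK : Nat.card ↥C = K) (hK2 : 2 ≤ K)
    (hd : IsLeast {r | ∃ c ∈ C, ∃ c' ∈ C, c ≠ c' ∧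
      r = pomsetWt m s P π (c - c')} d) :
    ∀ I, IsIdeal m s P I → rootCard I = (d - 1) / (m / 2) →
      rootSum π I ≤ n - Nat.clog m K := by
  intro I hI hr
  have : NeZero m := ⟨by omega⟩
  have hl : 0 < m / 2 := by omega
  rcases Nat.eq_zero_or_pos d with hd0 | hd0
  · have h0 : rootCard I = 0 := by rw [hr, hd0]; simp
    have h1 : rootSum π I = 0 := by
      unfold rootCard at h0
      unfold rootSum
      rw [Finset.card_eq_zero.mp h0]
      simp
    omega
  have hbw : ∀ (u : ∀ i : Fin s, Fin (π i) → ZMod m) i, blockWt m s π u i ≤ m / 2 := by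
    intro u i
    unfold blockWt
    refine Finset.sup_le fun t _ => ?_
    unfold leeWt
    omega
  -- the projection away from the root set is injective on the code
  have hinj : ∀ c ∈ C, ∀ c' ∈ C, (∀ i, ¬ 0 < I i → c i = c' i) → c = c' := by
    intro c hc c' hc' h
    by_contra hne
    have hle : d ≤ pomsetWt m s P π (c - c') := hd.2 ⟨c, hc, c', hc', hne, rfl⟩
    have hz : ∀ i, ¬ 0 < I i → blockWt m s π (c - c') i = 0 := by
      intro i hi
      unfold blockWt
      simp [h i hi, leeWt]
    have hub : pomsetWt m s P π (c - c') ≤ ∑ i : Fin s, if 0 < I i then m / 2 else 0 := by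
      unfold pomsetWt
      refine Finset.sum_le_sum fun i _ => ?_
      by_cases hi : 0 < I i
      · rw [if_pos hi]
        split_ifs
        · exact le_rfl
        · exact hbw _ _
      · rw [if_neg hi, if_neg, hz i hi]
        rintro ⟨j, hj, hij, hpos⟩
        have hIj : 0 < I j := by
          by_contra hcon
          rw [hz j hcon] at hpos
          exact lt_irrefl _ hpos
        have := hI.2 j i hIj hij (Ne.symm hj)
        omega
    have hcard : (∑ i : Fin s, if 0 < I i then m / 2 else 0) = rootCard I * (m / 2) := by
      rw [← Finset.sum_filter, Finset.sum_const, smul_eq_mul]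
      rfl
    rw [hcard, hr] at hub
    have := Nat.div_mul_le_self (d - 1) (m / 2)
    omega
  have hsplit : rootSum π I + ∑ a ∈ Finset.univ.filter (fun a => ¬ 0 < I a), π a = n := by
    rw [hn]
    exact Finset.sum_filter_add_sum_filter_not _ _ _
  have hKle : K ≤ m ^ (∑ a ∈ Finset.univ.filter (fun a => ¬ 0 < I a), π a) := by
    rw [← hK]
    have h1 := Nat.card_le_card_of_injective
      (fun (c : ↥C) (i : {i : Fin s // ¬ 0 < I i}) => c.1 i.1)
      (by
        intro c c' h
        apply Subtype.ext
        refine hinj _ c.2 _ c'.2 fun i hi => ?_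
        exact congrFun h ⟨i, hi⟩)
    refine h1.trans (le_of_eq ?_)
    rw [Nat.card_pi]
    simp only [Nat.card_fun, Nat.card_zmod, Nat.card_fin]
    rw [Finset.prod_pow_eq_pow_sum]
    congr 1
    exact (Finset.sum_subtype _ (by simp) _).symm
  have := (Nat.clog_le_iff_le_pow (by omega : 1 < m)).mpr hKle
  omega

end
end

section
/- Let 𝕡_1 and 𝕡_2 be two pomsets on the same s coordinates, encoded by partial orders ⪯_1 and ⪯_2 on [s], such that 𝕡_2 is finer than 𝕡_1 (i.e. a ⪯_1 b implies a ⪯_2 b), and let π be a labeling with k_1 = k_2 = … = k_s = t. Then every MDS (𝕡_1,π)-code 𝒞 ⊆ ℤ_m^n is an MDS (𝕡_2,π)-code. -/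
open scoped Classical

noncomputable section

theorem aux_lower {α : Type*} [PartialOrder α] [Fintype α] (r : ℕ) (hr : r ≤ Fintype.card α) :
    ∃ D : Finset α, D.card = r ∧ ∀ a b, a ∈ D → b ≤ a → b ∈ D := by
  induction r with
  | zero => exact ⟨∅, by simp, by simp⟩
  | succ k ih =>
    obtain ⟨D, hD, hl⟩ := ih (by omega)
    have hne : (Dᶜ).Nonempty := by
      rw [← Finset.card_pos, Finset.card_compl]; omega
    obtain ⟨x, hx⟩ := Finset.exists_minimal hne
    have hxD : x ∉ D := Finset.mem_compl.1 hx.1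
    refine ⟨insert x D, by rw [Finset.card_insert_of_notMem hxD, hD], ?_⟩
    intro a b ha hb
    rcases Finset.mem_insert.1 ha with rfl | ha
    · by_cases hbD : b ∈ D
      · exact Finset.mem_insert_of_mem hbD
      · have := hx.2 (Finset.mem_compl.2 hbD) hb
        rw [le_antisymm hb this]; exact Finset.mem_insert_self _ _
    · exact Finset.mem_insert_of_mem (hl a b ha hb)

theorem aux_block_le (m s : ℕ) (π : Fin s → ℕ) (u : ∀ i : Fin s, Fin (π i) → ZMod m)
    (i : Fin s) : blockWt m s π u i ≤ m / 2 := by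
  unfold blockWt
  apply Finset.sup_le
  intro t _
  unfold leeWt
  omega

theorem aux_mono (m s : ℕ) (P1 P2 : PartialOrder (Fin s))
    (hfiner : ∀ a b : Fin s, P1.le a b → P2.le a b)
    (π : Fin s → ℕ) (u : ∀ i : Fin s, Fin (π i) → ZMod m) :
    pomsetWt m s P1 π u ≤ pomsetWt m s P2 π u := by
  unfold pomsetWt
  apply Finset.sum_le_sum
  intro i _
  by_cases h1 : ∃ j, j ≠ i ∧ P1.le i j ∧ 0 < blockWt m s π u j
  · have h2 : ∃ j, j ≠ i ∧ P2.le i j ∧ 0 < blockWt m s π u j := by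
      obtain ⟨j, h, h', h''⟩ := h1
      exact ⟨j, h, hfiner _ _ h', h''⟩
    rw [if_pos h1, if_pos h2]
  · rw [if_neg h1]
    split_ifs
    · exact aux_block_le m s π u i
    · exact le_rfl

theorem aux_wt_le (m s : ℕ) (P : PartialOrder (Fin s)) (π : Fin s → ℕ)
    (u : ∀ i : Fin s, Fin (π i) → ZMod m) (D : Finset (Fin s))
    (hD : ∀ a b, a ∈ D → P.le b a → b ∈ D) (hu : ∀ i, i ∉ D → u i = 0) :
    pomsetWt m s P π u ≤ D.card * (m / 2) := by
  have hb : ∀ i, i ∉ D → blockWt m s π u i = 0 := by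
    intro i hi
    unfold blockWt
    rw [hu i hi]
    apply Nat.le_zero.1
    apply Finset.sup_le
    intro t _
    simp [leeWt]
  unfold pomsetWt
  rw [← Finset.sum_subset (Finset.subset_univ D)]
  · apply Finset.sum_le_card_nsmul
    intro i _
    split_ifs
    · exact le_rfl
    · exact aux_block_le m s π u i
  · intro i _ hi
    rw [if_neg, hb i hi]
    rintro ⟨j, _, hij, hj⟩
    by_cases hjD : j ∈ D
    · exact hi (hD j i hjD hij)
    · rw [hb j hjD] at hj; exact absurd hj (lt_irrefl _)

theorem aux_min_le (m s : ℕ) (P : PartialOrder (Fin s)) (π : Fin s → ℕ)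
    (C : Set (∀ i : Fin s, Fin (π i) → ZMod m)) (c c') (hc : c ∈ C) (hc' : c' ∈ C)
    (h : c ≠ c') : minDist m s P π C ≤ pomsetWt m s P π (c - c') :=
  Nat.sInf_le ⟨c, hc, c', hc', h, rfl⟩

theorem aux_card (m s : ℕ) (hm : 4 ≤ m) (P : PartialOrder (Fin s)) (π : Fin s → ℕ)
    (t : ℕ) (ht : ∀ i, π i = t)
    (C : Set (∀ i : Fin s, Fin (π i) → ZMod m)) (D : Finset (Fin s))
    (hD : ∀ a b, a ∈ D → P.le b a → b ∈ D)
    (hr : D.card = (minDist m s P π C - 1) / (m / 2)) :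
    Nat.clog m (Nat.card ↥C) ≤ (s - D.card) * t := by
  haveI : NeZero m := ⟨by omega⟩
  let f : ↥C → (∀ i : {i // i ∉ D}, Fin (π i) → ZMod m) := fun c i => c.1 i.1
  have hf : Function.Injective f := by
    rintro ⟨c, hc⟩ ⟨c', hc'⟩ h
    by_contra hne
    have hne' : c ≠ c' := fun h => hne (Subtype.ext h)
    have hag : ∀ i, i ∉ D → c i = c' i := fun i hi => congrFun h ⟨i, hi⟩
    have h1 := aux_min_le m s P π C c c' hc hc' hne'
    have h2 := aux_wt_le m s P π (c - c') D hD
      (fun i hi => by rw [Pi.sub_apply, hag i hi, sub_self])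
    have h3 := Nat.div_mul_le_self (minDist m s P π C - 1) (m / 2)
    rw [← hr] at h3
    have h0 : minDist m s P π C = 0 := by omega
    rw [h0] at hr
    simp at hr
    apply hne'
    funext i
    exact hag i (by simp [hr])
  have hle := Nat.card_le_card_of_injective f hf
  apply Nat.clog_le_of_le_pow
  refine hle.trans (le_of_eq ?_)
  rw [Nat.card_pi]
  simp only [Nat.card_eq_fintype_card, Fintype.card_fun, ZMod.card, Fintype.card_fin, ht]
  rw [Finset.prod_const, ← pow_mul, mul_comm]
  congr 2
  rw [Finset.card_univ, Fintype.card_subtype_compl]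
  simp

theorem aux_rootSum {s : ℕ} (π I : Fin s → ℕ) (t : ℕ) (ht : ∀ i, π i = t) :
    rootSum π I = rootCard I * t := by
  simp [rootSum, rootCard, ht]

/-- if `𝕡₂` is finer than `𝕡₁` and all blocks have the same dimension,
every MDS `(𝕡₁,π)`-code is an MDS `(𝕡₂,π)`-code. -/
theorem mds_of_finer_pomset
    (m s : ℕ) (hm : 4 ≤ m) (hs : 1 ≤ s)
    (P1 P2 : PartialOrder (Fin s))
    (hfiner : ∀ a b : Fin s, P1.le a b → P2.le a b)
    (π : Fin s → ℕ) (hπ : ∀ i, 0 < π i)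
    (t : ℕ) (ht : ∀ i, π i = t)
    (n : ℕ) (hn : n = ∑ i, π i)
    (C : Set (∀ i : Fin s, Fin (π i) → ZMod m)) (hK : 2 ≤ Nat.card ↥C) :
    IsMDS m s P1 π C → IsMDS m s P2 π C := by
  rintro ⟨-, I1, -, hI1, hS1⟩
  have ht0 : 0 < t := by have := hπ ⟨0, hs⟩; rwa [ht] at this
  have hl : 0 < m / 2 := by omega
  have hsum : ∑ i, π i = s * t := by simp [ht]
  obtain ⟨⟨c, hc⟩, ⟨c', hc'⟩, hne⟩ : ∃ a b : ↥C, a ≠ b := by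
    haveI : Finite ↥C := Nat.finite_of_card_ne_zero (by omega)
    haveI := Finite.one_lt_card_iff_nontrivial.1 (show 1 < Nat.card ↥C by omega)
    exact exists_pair_ne _
  have hcc : c ≠ c' := fun h => hne (Subtype.ext h)
  have h12 : minDist m s P1 π C ≤ minDist m s P2 π C := by
    have hmem := Nat.sInf_mem (s := {r | ∃ c ∈ C, ∃ c' ∈ C, c ≠ c' ∧
      r = pomsetWt m s P2 π (c - c')}) ⟨_, c, hc, c', hc', hcc, rfl⟩
    obtain ⟨a, ha, b, hb, hab, h⟩ := hmem
    unfold minDist at *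
    rw [h]
    exact (aux_min_le m s P1 π C a b ha hb hab).trans (aux_mono m s P1 P2 hfiner π _)
  have hds : minDist m s P2 π C ≤ s * (m / 2) := by
    have h1 := aux_min_le m s P2 π C c c' hc hc' hcc
    have h2 := aux_wt_le m s P2 π (c - c') Finset.univ (by simp) (by simp)
    simp only [Finset.card_univ, Fintype.card_fin] at h2
    omega
  have hr2 : (minDist m s P2 π C - 1) / (m / 2) ≤ s := by
    apply Nat.div_le_of_le_mul
    rw [mul_comm]; omega
  have hr12 : (minDist m s P1 π C - 1) / (m / 2) ≤ (minDist m s P2 π C - 1) / (m / 2) :=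
    Nat.div_le_div_right (by omega)
  obtain ⟨D, hDc, hDl⟩ := @aux_lower (Fin s) P2 _ ((minDist m s P2 π C - 1) / (m / 2))
    (by simpa using hr2)
  have hcl := aux_card m s hm P2 π t ht C D hDl hDc
  rw [hDc] at hcl
  rw [aux_rootSum π I1 t ht, hI1, hsum] at hS1
  have hle : (minDist m s P2 π C - 1) / (m / 2) * t ≤ s * t - Nat.clog m (Nat.card ↥C) := by
    have h := Nat.mul_le_mul_right t hr2
    rw [Nat.sub_mul] at hcl
    omega
  have heq : (minDist m s P2 π C - 1) / (m / 2) * t = s * t - Nat.clog m (Nat.card ↥C) := by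
    apply le_antisymm hle
    rw [← hS1]
    exact Nat.mul_le_mul_right t hr12
  refine ⟨?_, ?_⟩
  · intro I _ hI
    rw [aux_rootSum π I t ht, hI, hsum]
    exact hle
  · have hI : rootCard (fun a => if a ∈ D then m / 2 else 0) =
        (minDist m s P2 π C - 1) / (m / 2) := by
      rw [← hDc]
      unfold rootCard
      congr 1
      ext a
      by_cases h : a ∈ D
      · simp only [Finset.mem_filter, Finset.mem_univ, true_and, h, if_true, hl]
      · simp [h]
    refine ⟨fun a => if a ∈ D then m / 2 else 0, ⟨?_, ?_⟩, hI, ?_⟩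
    · intro a
      dsimp only
      split_ifs <;> omega
    · intro a b ha hb _
      by_cases h : a ∈ D
      · exact if_pos (hDl a b h hb)
      · simp [h] at ha
    · rw [aux_rootSum π _ t ht, hI, hsum]
      exact heq

end
end
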